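/- arXiv:1708.05363 — 2 statements merged into one kernel-verified Lean document; each statement's English description precedes it below -/
import Mathlib

section
/- Let N ≥ 1 and consider cells k = 1, …, N with interfaces indexed k + 1/2 for k = 0, …, N. At each interface suppose given real numbers A⁻, A⁺ ≥ 0, u⁻, u⁺, and c⁻, c⁺ ≥ 0, with one-sided local speeds a⁺ = max{0, u⁺ + c⁺, u⁻ + c⁻} and a⁻ = min{0, u⁺ − c⁺, u⁻ − c⁻} satisfying a⁺ − a⁻ > 0, and define the central-upwind mass flux H = (a⁺ u⁻A⁻ − a⁻ u⁺A⁺)/(a⁺ − a⁻) + a⁺a⁻(A⁺ − A⁻)/(a⁺ − a⁻). For each cell k let Δx_k > 0 and Ā_k ≥ 0. If Δt ≥ 0 satisfies, for every k, Δt·(a⁺_{k−1/2} − a⁻_{k+1/2}) ≤ Δx_k and Δt·(a⁺_{k+1/2} A⁻_{k+1/2} − a⁻_{k−1/2} A⁺_{k−1/2}) ≤ Δx_k Ā_k, then for every k the forward-Euler update Ā_k^{new} = Ā_k − (Δt/Δx_k)(H_{k+1/2} − H_{k−1/2}) satisfies Ā_k^{new} ≥ 0. -/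
/-- Channel-cell part of the positivity-preserving theorem for the central-upwind scheme:
under the CFL-type restrictions `Δt (a⁺_{k-1/2} - a⁻_{k+1/2}) ≤ Δx_k` and
`Δt (a⁺_{k+1/2} A⁻_{k+1/2} - a⁻_{k-1/2} A⁺_{k-1/2}) ≤ Δx_k Ā_k`, the forward-Euler
update of the cell-averaged wetted area stays nonnegative. Interfaces `k ∓ 1/2` of cell
`k : Fin N` are `k.castSucc` and `k.succ` in `Fin (N+1)`. -/
theorem stmt1 (N : ℕ) (hN : 1 ≤ N)
    (Am Ap um up cm cp ap am H : Fin (N + 1) → ℝ)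
    (hAm : ∀ m, 0 ≤ Am m) (hAp : ∀ m, 0 ≤ Ap m)
    (hcm : ∀ m, 0 ≤ cm m) (hcp : ∀ m, 0 ≤ cp m)
    (hap : ∀ m, ap m = max 0 (max (up m + cp m) (um m + cm m)))
    (ham : ∀ m, am m = min 0 (min (up m - cp m) (um m - cm m)))
    (hpos : ∀ m, 0 < ap m - am m)
    (hH : ∀ m, H m = (ap m * um m * Am m - am m * up m * Ap m) / (ap m - am m)
        + ap m * am m * (Ap m - Am m) / (ap m - am m))
    (Δx Abar : Fin N → ℝ)
    (hΔx : ∀ k, 0 < Δx k) (hAbar : ∀ k, 0 ≤ Abar k)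
    (Δt : ℝ) (hΔt : 0 ≤ Δt)
    (hCFL1 : ∀ k : Fin N, Δt * (ap k.castSucc - am k.succ) ≤ Δx k)
    (hCFL2 : ∀ k : Fin N,
      Δt * (ap k.succ * Am k.succ - am k.castSucc * Ap k.castSucc) ≤ Δx k * Abar k) :
    ∀ k : Fin N, 0 ≤ Abar k - Δt / Δx k * (H k.succ - H k.castSucc) := by
  have h1 : ∀ m, 0 ≤ ap m ∧ up m ≤ ap m ∧ um m ≤ ap m := by
    intro m
    have a := le_max_left 0 (max (up m + cp m) (um m + cm m))
    have b := le_max_right 0 (max (up m + cp m) (um m + cm m))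
    have c := le_max_left (up m + cp m) (um m + cm m)
    have d := le_max_right (up m + cp m) (um m + cm m)
    rw [← hap m] at a b
    have := hcm m
    have := hcp m
    refine ⟨a, ?_, ?_⟩ <;> linarith
  have h2 : ∀ m, am m ≤ 0 ∧ am m ≤ up m ∧ am m ≤ um m := by
    intro m
    have a := min_le_left 0 (min (up m - cp m) (um m - cm m))
    have b := min_le_right 0 (min (up m - cp m) (um m - cm m))
    have c := min_le_left (up m - cp m) (um m - cm m)
    have d := min_le_right (up m - cp m) (um m - cm m)
    rw [← ham m] at a b
    have := hcm m
    have := hcp m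
    refine ⟨a, ?_, ?_⟩ <;> linarith
  have hup : ∀ m, H m ≤ ap m * Am m := by
    intro m
    obtain ⟨a, b, c⟩ := h1 m
    obtain ⟨d, e, f⟩ := h2 m
    rw [hH m, ← add_div, div_le_iff₀ (hpos m)]
    have p := mul_nonneg (mul_nonneg a (hAm m)) (sub_nonneg.2 c)
    have q := mul_nonneg (mul_nonneg (neg_nonneg.2 d) (hAp m)) (sub_nonneg.2 b)
    linarith
  have hlo : ∀ m, am m * Ap m ≤ H m := by
    intro m
    obtain ⟨a, b, c⟩ := h1 m
    obtain ⟨d, e, f⟩ := h2 m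
    rw [hH m, ← add_div, le_div_iff₀ (hpos m)]
    have p := mul_nonneg (mul_nonneg a (hAm m)) (sub_nonneg.2 f)
    have q := mul_nonneg (mul_nonneg (neg_nonneg.2 d) (hAp m)) (sub_nonneg.2 e)
    linarith
  intro k
  rw [sub_nonneg, div_mul_eq_mul_div, div_le_iff₀ (hΔx k)]
  have h := mul_le_mul_of_nonneg_left (sub_le_sub (hup k.succ) (hlo k.castSucc)) hΔt
  have := hCFL2 k
  linarith
end

section
/- Let Ā ≥ 0, Δx > 0, let H₊ and H₋ be real numbers (the mass fluxes through the right and left faces of a cell), and let Δt₊, Δt₋ ≥ 0 be interface time steps. Define the draining time Δt^{drain} = Δx·Ā / (max(0, H₊) + max(0, −H₋)) whenever max(0, H₊) + max(0, −H₋) > 0. Assume that Δt₊ ≤ Δt^{drain} whenever H₊ > 0 and Δt₋ ≤ Δt^{drain} whenever H₋ < 0. Then the draining-time update Ā^{new} = Ā − (Δt₊·H₊ − Δt₋·H₋)/Δx satisfies Ā^{new} ≥ 0. -/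
/-- Draining-time update preserves nonnegativity of the cell-averaged wetted area: with
draining time `Δt^drain = Δx Ā / (max 0 H₊ + max 0 (-H₋))` (defined whenever the
denominator is positive), if `Δt₊ ≤ Δt^drain` whenever `H₊ > 0` and `Δt₋ ≤ Δt^drain`
whenever `H₋ < 0`, then `Ā - (Δt₊ H₊ - Δt₋ H₋)/Δx ≥ 0`. -/
theorem stmt3 (Abar Δx Hp Hm Δtp Δtm : ℝ)
    (hA : 0 ≤ Abar) (hΔx : 0 < Δx) (htp : 0 ≤ Δtp) (htm : 0 ≤ Δtm)
    (hdp : 0 < Hp → Δtp ≤ Δx * Abar / (max 0 Hp + max 0 (-Hm)))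
    (hdm : Hm < 0 → Δtm ≤ Δx * Abar / (max 0 Hp + max 0 (-Hm))) :
    0 ≤ Abar - (Δtp * Hp - Δtm * Hm) / Δx := by
  have hP : 0 ≤ max 0 Hp := le_max_left _ _
  have hM : 0 ≤ max 0 (-Hm) := le_max_left _ _
  have hxA : 0 ≤ Δx * Abar := mul_nonneg hΔx.le hA
  have hD : Δx * Abar / (max 0 Hp + max 0 (-Hm)) * (max 0 Hp + max 0 (-Hm)) ≤ Δx * Abar := by
    by_cases h0 : max 0 Hp + max 0 (-Hm) = 0
    · rw [h0, mul_zero]; exact hxA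
    · rw [div_mul_cancel₀ _ h0]
  have hD0 : 0 ≤ Δx * Abar / (max 0 Hp + max 0 (-Hm)) := div_nonneg hxA (add_nonneg hP hM)
  generalize Δx * Abar / (max 0 Hp + max 0 (-Hm)) = D at *
  have h1 : Δtp * Hp ≤ D * max 0 Hp := by
    rcases lt_or_ge 0 Hp with h | h
    · rw [max_eq_right h.le]
      exact mul_le_mul_of_nonneg_right (hdp h) h.le
    · exact (mul_nonpos_of_nonneg_of_nonpos htp h).trans (mul_nonneg hD0 hP)
  have h2 : Δtm * (-Hm) ≤ D * max 0 (-Hm) := by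
    rcases lt_or_ge Hm 0 with h | h
    · have h' : 0 ≤ -Hm := by linarith
      rw [max_eq_right h']
      exact mul_le_mul_of_nonneg_right (hdm h) h'
    · exact (mul_nonpos_of_nonneg_of_nonpos htm (by linarith)).trans (mul_nonneg hD0 hM)
  rw [sub_nonneg, div_le_iff₀ hΔx]
  linarith
end
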